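/- arXiv:2006.11608 — 2 statements merged into one kernel-verified Lean document; each statement's English description precedes it below -/
import Mathlib

section
/- Suppose c(α,β,ρ,λ) = (β(2−λ) + ρα)/(1−βλ) < 1. Let V_π ∈ ℝ^S be the unique fixed point of the robust Bellman operator T (which exists since T is a sup-norm contraction), and let w_π ∈ ℝ^L be the unique vector with Φw_π = Π T̃^{(λ)}(Φw_π). Then ‖V_π − Φw_π‖_d ≤ (1/(1 − c(α,β,ρ,λ)))·(‖V_π − Π V_π‖_d + βρ‖V_π‖_d/(1−βλ)). -/
/-!
Write `A = α P`. The exploration assumption makes `A` a `β`-contraction in the `d`-norm, because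
`A ≤ β Pe` entrywise and a stochastic matrix is nonexpansive in the norm weighted by its stationary
distribution (Jensen). Since `|α u| ≤ β Pe` entrywise as well, `α σ_U` is `β`-Lipschitz.

The fixed point `V_π` satisfies `V_π = (r + α σ_U(V_π)) + A V_π`; iterating this shows that every
`m`-step truncation, with the exact `σ_U` evaluated at `V_π`, returns `V_π`. Hence, for
`W = Φ w_π`, the difference `T̃ W - V_π` is `(1-λ) ∑ λ^m (∑_{t ≤ m} A^t x + A^(m+1) (W - V_π))`
with `x = α (σ_Û(W) - σ_U(V_π))`, whose norm is at most
`(‖x‖ + (1-λ) β ‖W - V_π‖) / (1 - β λ)`. Bounding `‖x‖` by the Lipschitz property and by the `ρ`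
estimate, and using that `Π` is linear and nonexpansive, gives
`‖V_π - W‖ ≤ ‖V_π - Π V_π‖ + c ‖V_π - W‖ + βρ‖V_π‖ / (1 - β λ)`.
-/

open Matrix Finset

/-- d-weighted Euclidean norm on ℝ^S. -/
noncomputable def dnorm {S : Type*} [Fintype S] (d V : S → ℝ) : ℝ :=
  Real.sqrt (∑ s, d s * (V s) ^ 2)

/-- σ_U(V)(s) = inf_{u ∈ U_s} Σ_{s'} u(s') V(s'). -/
noncomputable def sigmaSet {S : Type*} [Fintype S] (U : S → Set (S → ℝ)) (V : S → ℝ) :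
    S → ℝ :=
  fun s => sInf ((fun u => ∑ s', u s' * V s') '' U s)

/-- The robust Bellman operator T(V) = r + α (P V + σ_U(V)). -/
noncomputable def bellman {S : Type*} [Fintype S] (r : S → ℝ) (P : Matrix S S ℝ)
    (α : ℝ) (U : S → Set (S → ℝ)) (V : S → ℝ) : S → ℝ :=
  fun s => r s + α * (P.mulVec V s + sigmaSet U V s)

/-- The (approximate) robust TD(λ) operator built from the uncertainty sets `Uh`. -/
noncomputable def approxOp {S : Type*} [Fintype S] [DecidableEq S] (r : S → ℝ)
    (P : Matrix S S ℝ) (α lam : ℝ) (Uh : S → Set (S → ℝ)) (V : S → ℝ) : S → ℝ :=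
  (1 - lam) • ∑' m : ℕ, lam ^ m •
    ((∑ t ∈ Finset.range (m + 1), ((α • P) ^ t).mulVec r)
      + α • (∑ t ∈ Finset.range (m + 1), ((α • P) ^ t).mulVec (sigmaSet Uh V))
      + ((α • P) ^ (m + 1)).mulVec V)

/-- The d-weighted orthogonal projection Π = Φ(ΦᵀDΦ)⁻¹ΦᵀD onto the column space of Φ. -/
noncomputable def projMat {S : Type*} [Fintype S] [DecidableEq S] {L : ℕ}
    (Φ : Matrix S (Fin L) ℝ) (d : S → ℝ) : Matrix S S ℝ :=
  Φ * (Φᵀ * Matrix.diagonal d * Φ)⁻¹ * Φᵀ * Matrix.diagonal d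

/-! ### The weighted norm -/

/-- The scaling `V ↦ √d · V`, an isomorphism onto Euclidean space that carries `dnorm d` to the
Euclidean norm. -/
noncomputable def dEquiv {S : Type*} [Fintype S] (d : S → ℝ) (hd : ∀ s, 0 < d s) :
    (S → ℝ) ≃L[ℝ] EuclideanSpace ℝ S :=
  ((LinearEquiv.piCongrRight fun s => LinearEquiv.smulOfNeZero ℝ ℝ (Real.sqrt (d s))
      (Real.sqrt_ne_zero'.mpr (hd s))) ≪≫ₗ
    (WithLp.linearEquiv 2 ℝ (S → ℝ)).symm).toContinuousLinearEquiv

section dnormLemmas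

variable {S : Type*} [Fintype S] {d : S → ℝ}

lemma norm_dEquiv (hd : ∀ s, 0 < d s) (V : S → ℝ) : ‖dEquiv d hd V‖ = dnorm d V := by
  rw [EuclideanSpace.norm_eq, dnorm]
  congr 1
  refine Finset.sum_congr rfl fun s _ => ?_
  have h : dEquiv d hd V s = Real.sqrt (d s) * V s := rfl
  rw [h, Real.norm_eq_abs, sq_abs, mul_pow, Real.sq_sqrt (hd s).le]

lemma dnorm_add_le (hd : ∀ s, 0 < d s) (V W : S → ℝ) :
    dnorm d (V + W) ≤ dnorm d V + dnorm d W := by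
  simp only [← norm_dEquiv hd, map_add]
  exact norm_add_le _ _

lemma dnorm_smul (hd : ∀ s, 0 < d s) (a : ℝ) (V : S → ℝ) :
    dnorm d (a • V) = |a| * dnorm d V := by
  simp only [← norm_dEquiv hd, map_smul, norm_smul, Real.norm_eq_abs]

lemma dnorm_sub_comm (hd : ∀ s, 0 < d s) (V W : S → ℝ) :
    dnorm d (V - W) = dnorm d (W - V) := by
  simp only [← norm_dEquiv hd, map_sub]
  exact norm_sub_rev _ _

lemma dnorm_nonneg (V : S → ℝ) : 0 ≤ dnorm d V := Real.sqrt_nonneg _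

lemma dnorm_sum_le (hd : ∀ s, 0 < d s) {ι : Type*} (t : Finset ι) (f : ι → S → ℝ) :
    dnorm d (∑ i ∈ t, f i) ≤ ∑ i ∈ t, dnorm d (f i) := by
  simp only [← norm_dEquiv hd, map_sum]
  exact norm_sum_le _ _

/-- Comparison test for series of vectors, in the `d`-weighted norm. -/
lemma dnorm_tsum_le (hd : ∀ s, 0 < d s) {f : ℕ → S → ℝ} {g : ℕ → ℝ} {G : ℝ} (hg : HasSum g G)
    (h : ∀ m, dnorm d (f m) ≤ g m) : Summable f ∧ dnorm d (∑' m, f m) ≤ G := by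
  simp only [← norm_dEquiv hd] at h ⊢
  have hs : Summable fun m => dEquiv d hd (f m) := Summable.of_norm_bounded hg.summable h
  refine ⟨(ContinuousLinearEquiv.summable (dEquiv d hd)).mp hs, ?_⟩
  rw [ContinuousLinearEquiv.map_tsum]
  exact tsum_of_norm_bounded hg h

lemma dnorm_le_of_abs_le_const (hd : ∀ s, 0 < d s) (hstat1 : ∑ s, d s = 1) {V : S → ℝ} {K : ℝ}
    (hK : 0 ≤ K) (h : ∀ s, |V s| ≤ K) : dnorm d V ≤ K := by
  refine Real.sqrt_le_iff.mpr ⟨hK, ?_⟩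
  calc ∑ s, d s * V s ^ 2 ≤ ∑ s, d s * K ^ 2 :=
        Finset.sum_le_sum fun s _ => mul_le_mul_of_nonneg_left
          (sq_le_sq' (abs_le.mp (h s)).1 (abs_le.mp (h s)).2) (hd s).le
    _ = K ^ 2 := by rw [← Finset.sum_mul, hstat1, one_mul]

/-- A stochastic matrix is nonexpansive for its stationary distribution, by Jensen's inequality;
hence whatever is dominated pointwise by `β Pe |v|` has norm at most `β ‖v‖`. -/
lemma dnorm_le_of_abs_le_kernel (hd : ∀ s, 0 < d s) {Pe : Matrix S S ℝ}
    (hPe0 : ∀ s s', 0 ≤ Pe s s') (hPe1 : ∀ s, ∑ s', Pe s s' = 1)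
    (hstat2 : ∀ s', ∑ s, d s * Pe s s' = d s') {β : ℝ} (hβ : 0 ≤ β) {y v : S → ℝ}
    (h : ∀ s, |y s| ≤ β * ∑ s', Pe s s' * |v s'|) : dnorm d y ≤ β * dnorm d v := by
  refine Real.sqrt_le_iff.mpr ⟨mul_nonneg hβ (dnorm_nonneg _), ?_⟩
  have hv : 0 ≤ ∑ s, d s * v s ^ 2 :=
    Finset.sum_nonneg fun s _ => mul_nonneg (hd s).le (sq_nonneg _)
  rw [mul_pow, dnorm, Real.sq_sqrt hv]
  calc ∑ s, d s * y s ^ 2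
      ≤ ∑ s, d s * (β ^ 2 * ∑ s', Pe s s' * v s' ^ 2) := by
        refine Finset.sum_le_sum fun s _ => mul_le_mul_of_nonneg_left ?_ (hd s).le
        have hJ := Real.pow_arith_mean_le_arith_mean_pow_of_even Finset.univ (Pe s)
          (fun s' => |v s'|) (fun s' _ => hPe0 s s') (hPe1 s) even_two
        simp only [sq_abs] at hJ
        calc y s ^ 2 ≤ (β * ∑ s', Pe s s' * |v s'|) ^ 2 :=
              sq_le_sq' (abs_le.mp (h s)).1 (abs_le.mp (h s)).2
          _ = β ^ 2 * (∑ s', Pe s s' * |v s'|) ^ 2 := mul_pow _ _ _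
          _ ≤ _ := mul_le_mul_of_nonneg_left hJ (sq_nonneg _)
    _ = β ^ 2 * ∑ s', ∑ s, d s * Pe s s' * v s' ^ 2 := by
        rw [Finset.sum_comm, Finset.mul_sum]
        refine Finset.sum_congr rfl fun s _ => ?_
        simp only [Finset.mul_sum]
        exact Finset.sum_congr rfl fun s' _ => by ring
    _ = β ^ 2 * ∑ s, d s * v s ^ 2 := by
        congr 1
        refine Finset.sum_congr rfl fun s' _ => ?_
        rw [← Finset.sum_mul, hstat2]

lemma dnorm_pow_mulVec_le [DecidableEq S] {A : Matrix S S ℝ} {β : ℝ} (hβ : 0 ≤ β)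
    (hA : ∀ v, dnorm d (A.mulVec v) ≤ β * dnorm d v) (t : ℕ) (v : S → ℝ) :
    dnorm d ((A ^ t).mulVec v) ≤ β ^ t * dnorm d v := by
  induction t with
  | zero => simp
  | succ t ih =>
    rw [pow_succ', ← Matrix.mulVec_mulVec, pow_succ', mul_assoc]
    exact (hA _).trans (mul_le_mul_of_nonneg_left ih hβ)

/-- `Π` is nonexpansive: `Π x` and `x - Π x` are `d`-orthogonal, so Pythagoras applies. -/
lemma dnorm_projMat_le [DecidableEq S] (hd : ∀ s, 0 < d s) {L : ℕ} {Φ : Matrix S (Fin L) ℝ}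
    (hunit : IsUnit (Φᵀ * Matrix.diagonal d * Φ)) (x : S → ℝ) :
    dnorm d ((projMat Φ d).mulVec x) ≤ dnorm d x := by
  set p := (projMat Φ d).mulVec x with hp
  obtain ⟨w, hw⟩ : ∃ w, p = Φ.mulVec w := ⟨((Φᵀ * Matrix.diagonal d * Φ)⁻¹ * Φᵀ *
    Matrix.diagonal d).mulVec x, by
      rw [hp, projMat, Matrix.mulVec_mulVec]; simp only [Matrix.mul_assoc]⟩
  have hdet : IsUnit (Φᵀ * Matrix.diagonal d * Φ).det :=
    (Matrix.isUnit_iff_isUnit_det _).mp hunit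
  -- by the normal equations, the residual is `d`-orthogonal to the columns of `Φ`
  have hres : (Φᵀ * Matrix.diagonal d).mulVec (x - p) = 0 := by
    have hM : Φᵀ * Matrix.diagonal d * projMat Φ d = Φᵀ * Matrix.diagonal d := by
      have : Φᵀ * Matrix.diagonal d * projMat Φ d = (Φᵀ * Matrix.diagonal d * Φ) *
          (Φᵀ * Matrix.diagonal d * Φ)⁻¹ * (Φᵀ * Matrix.diagonal d) := by
        simp only [projMat, Matrix.mul_assoc]
      rw [this, Matrix.mul_nonsing_inv _ hdet, Matrix.one_mul]
    rw [Matrix.mulVec_sub, hp, Matrix.mulVec_mulVec, hM, sub_self]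
  have horth : ∑ s, d s * (p s * (x s - p s)) = 0 := by
    have h1 : p ⬝ᵥ (Matrix.diagonal d).mulVec (x - p) = 0 := by
      have h2 : ∀ z : S → ℝ, Φ.mulVec w ⬝ᵥ z = w ⬝ᵥ Φᵀ.mulVec z := fun z => by
        rw [← Matrix.vecMul_transpose, ← Matrix.dotProduct_mulVec]
      calc p ⬝ᵥ (Matrix.diagonal d).mulVec (x - p)
          = Φ.mulVec w ⬝ᵥ (Matrix.diagonal d).mulVec (x - p) := by rw [← hw]
        _ = 0 := by rw [h2, Matrix.mulVec_mulVec, hres, dotProduct_zero]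
    rw [← h1]
    simp only [dotProduct, Matrix.mulVec_diagonal, Pi.sub_apply]
    exact Finset.sum_congr rfl fun s _ => by ring
  refine Real.sqrt_le_sqrt ?_
  have hpyth : ∑ s, d s * x s ^ 2 = ∑ s, d s * p s ^ 2 + ∑ s, d s * (x s - p s) ^ 2
      + 2 * ∑ s, d s * (p s * (x s - p s)) := by
    rw [Finset.mul_sum, ← Finset.sum_add_distrib, ← Finset.sum_add_distrib]
    exact Finset.sum_congr rfl fun s _ => by ring
  have h0 : 0 ≤ ∑ s, d s * (x s - p s) ^ 2 :=
    Finset.sum_nonneg fun s _ => mul_nonneg (hd s).le (sq_nonneg _)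
  rw [hpyth, horth]
  linarith

end dnormLemmas

/-! ### The uncertainty term and the multistep expansion -/

/-- One-sided Lipschitz estimate for the support function of a compact uncertainty set; the bound
is symmetric in `V` and `W`, so it applies in both directions. -/
lemma alpha_sigmaSet_le {S : Type*} [Fintype S] {U : S → Set (S → ℝ)}
    (hU : ∀ s, (U s).Nonempty) (hUc : ∀ s, IsCompact (U s)) {α : ℝ} (hα : 0 < α)
    {K : S → S → ℝ} (hK : ∀ s s', ∀ u ∈ U s, |α * u s'| ≤ K s s') (V W : S → ℝ) (s : S) :
    α * sigmaSet U V s ≤ α * sigmaSet U W s + ∑ s', K s s' * |(V - W) s'| := by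
  have hbdd : BddBelow ((fun u : S → ℝ => ∑ s', u s' * V s') '' U s) :=
    ((hUc s).image (by fun_prop)).bddBelow
  have key : (α * sigmaSet U V s - ∑ s', K s s' * |(V - W) s'|) / α ≤ sigmaSet U W s := by
    refine le_csInf ((hU s).image _) ?_
    rintro _ ⟨u, hu, rfl⟩
    have h1 : sigmaSet U V s ≤ ∑ s', u s' * V s' := csInf_le hbdd ⟨u, hu, rfl⟩
    rw [div_le_iff₀ hα]
    have h2 : α * ∑ s', u s' * V s' ≤
        α * (∑ s', u s' * W s') + ∑ s', K s s' * |(V - W) s'| := by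
      rw [Finset.mul_sum, Finset.mul_sum, ← Finset.sum_add_distrib]
      refine Finset.sum_le_sum fun s' _ => ?_
      have h3 : α * u s' * (V s' - W s') ≤ K s s' * |(V - W) s'| :=
        (le_abs_self _).trans (by
          rw [abs_mul]
          exact mul_le_mul_of_nonneg_right (hK s s' u hu) (abs_nonneg _))
      linarith
    have h4 := mul_le_mul_of_nonneg_left h1 hα.le
    simp only
    linarith
  rw [div_le_iff₀ hα] at key
  linarith

/-- Unrolling the affine fixed-point equation `V = b + A V` for `m` steps. -/
lemma unroll_fixed_point {S : Type*} [Fintype S] [DecidableEq S] {A : Matrix S S ℝ} {b V : S → ℝ}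
    (h : V = b + A.mulVec V) (m : ℕ) :
    (∑ t ∈ Finset.range m, (A ^ t).mulVec b) + (A ^ m).mulVec V = V := by
  induction m with
  | zero => simp
  | succ m ih =>
    rw [Finset.sum_range_succ, pow_succ, ← Matrix.mulVec_mulVec, add_assoc, ← Matrix.mulVec_add,
      ← h, ih]

/-- The `λ`-weighted average of the `m`-step bounds, in closed form. -/
lemma hasSum_lambda_bound {lam β : ℝ} (hl0 : 0 ≤ lam) (hl1 : lam < 1) (hβ0 : 0 ≤ β) (hβ1 : β < 1)
    (X E : ℝ) :
    HasSum (fun m : ℕ => lam ^ m * ((∑ t ∈ Finset.range (m + 1), β ^ t) * X + β ^ (m + 1) * E))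
      ((X / (1 - lam) + β * E) / (1 - β * lam)) := by
  have hlb : β * lam < 1 := by nlinarith
  have h1 := hasSum_geometric_of_lt_one hl0 hl1
  have h2 := hasSum_geometric_of_lt_one (mul_nonneg hβ0 hl0) hlb
  have e1 : (1 - lam) ≠ 0 := by linarith
  have e2 : (1 - β * lam) ≠ 0 := by linarith
  have e3 : (1 - β) ≠ 0 := by linarith
  have e4 : (1 - lam * β) ≠ 0 := by linarith
  have hf : ∀ m : ℕ,
      lam ^ m * ((∑ t ∈ Finset.range (m + 1), β ^ t) * X + β ^ (m + 1) * E) =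
        X / (1 - β) * lam ^ m + (β * E - β * X / (1 - β)) * (β * lam) ^ m := fun m => by
    have hgeo : ∑ t ∈ Finset.range (m + 1), β ^ t = (1 - β ^ (m + 1)) / (1 - β) := by
      rw [eq_div_iff e3, geom_sum_mul_neg]
    rw [hgeo, mul_pow]
    field_simp
    ring
  have hv : (X / (1 - lam) + β * E) / (1 - β * lam) =
      X / (1 - β) * (1 - lam)⁻¹ + (β * E - β * X / (1 - β)) * (1 - β * lam)⁻¹ := by
    field_simp
    ring
  rw [funext hf, hv]
  exact (h1.mul_left _).add (h2.mul_left _)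

/-! ### The error bound -/

theorem approxOp_fixed_point_error_bound
    {S : Type*} [Fintype S] [DecidableEq S] [Nonempty S] {L : ℕ}
    (d : S → ℝ) (hd : ∀ s, 0 < d s)
    (r : S → ℝ) (P : Matrix S S ℝ)
    (hP0 : ∀ s s', 0 ≤ P s s') (hP1 : ∀ s, ∑ s', P s s' = 1)
    (α : ℝ) (hα : α ∈ Set.Ioo (0 : ℝ) 1)
    (U : S → Set (S → ℝ)) (hU : ∀ s, (U s).Nonempty) (hUc : ∀ s, IsCompact (U s))
    (Pe : Matrix S S ℝ) (hPe0 : ∀ s s', 0 ≤ Pe s s') (hPe1 : ∀ s, ∑ s', Pe s s' = 1)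
    (β : ℝ) (hβ : β ∈ Set.Ioo (0 : ℝ) 1) (hαβ : α ≤ β)
    (hexp1 : ∀ s s', ∀ u ∈ U s, 0 ≤ P s s' + u s')
    (hexp2 : ∀ s s', ∀ u ∈ U s, α * (P s s' + u s') ≤ β * Pe s s')
    (hexp3 : ∀ s s', α * P s s' ≤ β * Pe s s')
    (hstat1 : ∑ s, d s = 1) (hstat2 : ∀ s', ∑ s, d s * Pe s s' = d s')
    (Uh : S → Set (S → ℝ)) (hUh : ∀ s, (Uh s).Nonempty) (hUhc : ∀ s, IsCompact (Uh s))
    (ρ : ℝ) (hρ0 : 0 ≤ ρ)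
    (hρ : ∀ (V : S → ℝ) (s : S), |sigmaSet Uh V s - sigmaSet U V s| ≤ ρ * dnorm d V)
    (lam : ℝ) (hlam : lam ∈ Set.Ico (0 : ℝ) 1)
    (Φ : Matrix S (Fin L) ℝ) (hrank : Φ.rank = L)
    (hunit : IsUnit (Φᵀ * Matrix.diagonal d * Φ))
    (hc : (β * (2 - lam) + ρ * α) / (1 - β * lam) < 1)
    (Vpi : S → ℝ) (hVpi : bellman r P α U Vpi = Vpi)
    (hVpiUniq : ∀ V : S → ℝ, bellman r P α U V = V → V = Vpi)
    (wpi : Fin L → ℝ)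
    (hwpi : Φ.mulVec wpi = (projMat Φ d).mulVec (approxOp r P α lam Uh (Φ.mulVec wpi)))
    (hwpiUniq : ∀ w : Fin L → ℝ,
      Φ.mulVec w = (projMat Φ d).mulVec (approxOp r P α lam Uh (Φ.mulVec w)) → w = wpi) :
    dnorm d (Vpi - Φ.mulVec wpi)
      ≤ (1 / (1 - (β * (2 - lam) + ρ * α) / (1 - β * lam)))
        * (dnorm d (Vpi - (projMat Φ d).mulVec Vpi)
            + β * ρ * dnorm d Vpi / (1 - β * lam)) := by
  obtain ⟨hα0, hα1⟩ := hα
  obtain ⟨hβ0, hβ1⟩ := hβ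
  obtain ⟨hl0, hl1⟩ := hlam
  set W := Φ.mulVec wpi with hW
  set A := α • P with hA
  set E := dnorm d (W - Vpi) with hE
  have hE0 : 0 ≤ E := dnorm_nonneg _
  have hAc : ∀ v, dnorm d (A.mulVec v) ≤ β * dnorm d v := fun v => by
    refine dnorm_le_of_abs_le_kernel hd hPe0 hPe1 hstat2 hβ0.le fun s => ?_
    rw [Finset.mul_sum]
    refine (Finset.abs_sum_le_sum_abs _ _).trans (Finset.sum_le_sum fun s' _ => ?_)
    rw [abs_mul, ← mul_assoc]
    refine mul_le_mul_of_nonneg_right ?_ (abs_nonneg _)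
    change |α * P s s'| ≤ _
    rw [abs_of_nonneg (mul_nonneg hα0.le (hP0 s s'))]
    exact hexp3 s s'
  have hK : ∀ s s', ∀ u ∈ U s, |α * u s'| ≤ β * Pe s s' := fun s s' u hu => by
    -- the bounds give `-α P ≤ α u ≤ β Pe - α P`, and both ends lie within `β Pe` of zero
    have h1 := mul_nonneg hα0.le (hexp1 s s' u hu)
    have h2 := hexp2 s s' u hu
    have h3 := hexp3 s s'
    have h4 := mul_nonneg hα0.le (hP0 s s')
    rw [abs_le]
    constructor <;> linarith
  have hsig : dnorm d (α • (sigmaSet U W - sigmaSet U Vpi)) ≤ β * E := by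
    refine dnorm_le_of_abs_le_kernel hd hPe0 hPe1 hstat2 hβ0.le fun s => ?_
    have h1 := alpha_sigmaSet_le hU hUc hα0 hK W Vpi s
    have h2 := alpha_sigmaSet_le hU hUc hα0 hK Vpi W s
    simp only [Pi.sub_apply, abs_sub_comm (Vpi _) (W _)] at h1 h2
    simp only [Finset.mul_sum, ← mul_assoc, Pi.smul_apply, Pi.sub_apply, smul_eq_mul, abs_le]
    constructor <;> linarith
  have herr : dnorm d (α • (sigmaSet Uh W - sigmaSet U W)) ≤ α * (ρ * dnorm d W) := by
    rw [dnorm_smul hd, abs_of_pos hα0]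
    exact mul_le_mul_of_nonneg_left (dnorm_le_of_abs_le_const hd hstat1
      (mul_nonneg hρ0 (dnorm_nonneg _)) fun s => hρ W s) hα0.le
  have hWle : dnorm d W ≤ E + dnorm d Vpi := by
    simpa using dnorm_add_le hd (W - Vpi) Vpi
  set x := α • (sigmaSet Uh W - sigmaSet U Vpi) with hx
  have hxle : dnorm d x ≤ β * E + α * (ρ * (E + dnorm d Vpi)) := by
    have hsplit : x = α • (sigmaSet U W - sigmaSet U Vpi)
        + α • (sigmaSet Uh W - sigmaSet U W) := by
      rw [hx, ← smul_add]; congr 1; abel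
    rw [hsplit]
    have h1 := dnorm_add_le hd (α • (sigmaSet U W - sigmaSet U Vpi))
      (α • (sigmaSet Uh W - sigmaSet U W))
    have h2 := mul_le_mul_of_nonneg_left (mul_le_mul_of_nonneg_left hWle hρ0) hα0.le
    linarith
  have hfix : Vpi = (r + α • sigmaSet U Vpi) + A.mulVec Vpi := by
    conv_lhs => rw [← hVpi]
    funext s
    simp only [bellman, hA, Matrix.smul_mulVec, Pi.add_apply, Pi.smul_apply, smul_eq_mul]
    ring
  set D : ℕ → S → ℝ := fun m =>
    (∑ t ∈ Finset.range (m + 1), (A ^ t).mulVec x) + (A ^ (m + 1)).mulVec (W - Vpi) with hD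
  have hterm : ∀ m, (∑ t ∈ Finset.range (m + 1), (A ^ t).mulVec r)
      + α • (∑ t ∈ Finset.range (m + 1), (A ^ t).mulVec (sigmaSet Uh W))
      + (A ^ (m + 1)).mulVec W = Vpi + D m := fun m => by
    conv_rhs => rw [← unroll_fixed_point hfix (m + 1)]
    simp only [hD, hx, Matrix.mulVec_add, Matrix.mulVec_sub, Matrix.mulVec_smul,
      Finset.sum_add_distrib, Finset.sum_sub_distrib, ← Finset.smul_sum, smul_sub]
    abel
  have hDle : ∀ m, dnorm d (lam ^ m • D m) ≤
      lam ^ m * ((∑ t ∈ Finset.range (m + 1), β ^ t) * dnorm d x + β ^ (m + 1) * E) := fun m => by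
    rw [dnorm_smul hd, abs_of_nonneg (pow_nonneg hl0 m)]
    refine mul_le_mul_of_nonneg_left ?_ (pow_nonneg hl0 m)
    refine (dnorm_add_le hd _ _).trans (add_le_add ?_ (dnorm_pow_mulVec_le hβ0.le hAc _ _))
    rw [Finset.sum_mul]
    exact (dnorm_sum_le hd _ _).trans
      (Finset.sum_le_sum fun t _ => dnorm_pow_mulVec_le hβ0.le hAc _ _)
  obtain ⟨hsum, hle⟩ :=
    dnorm_tsum_le hd (hasSum_lambda_bound hl0 hl1 hβ0.le hβ1 (dnorm d x) E) hDle
  have hl : 0 < 1 - lam := by linarith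
  have happ : approxOp r P α lam Uh W - Vpi = (1 - lam) • ∑' m, lam ^ m • D m := by
    have hgeo : HasSum (fun m : ℕ => lam ^ m • Vpi) ((1 - lam)⁻¹ • Vpi) :=
      (hasSum_geometric_of_lt_one hl0 hl1).smul_const Vpi
    have h1 : approxOp r P α lam Uh W = (1 - lam) • ∑' m : ℕ, lam ^ m • (Vpi + D m) := by
      simp only [approxOp, ← hA, hterm]
    rw [h1]
    simp only [smul_add]
    rw [hgeo.summable.tsum_add hsum, hgeo.tsum_eq, smul_add, smul_smul,
      mul_inv_cancel₀ hl.ne', one_smul, add_sub_cancel_left]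
  have hlb : 0 < 1 - β * lam := by nlinarith
  have happle : dnorm d (approxOp r P α lam Uh W - Vpi) ≤
      (dnorm d x + (1 - lam) * β * E) / (1 - β * lam) := by
    rw [happ, dnorm_smul hd, abs_of_pos hl]
    refine (mul_le_mul_of_nonneg_left hle hl.le).trans (le_of_eq ?_)
    field_simp
  have hEsymm : dnorm d (Vpi - W) = E := dnorm_sub_comm hd _ _
  have hdecomp : Vpi - W = (Vpi - (projMat Φ d).mulVec Vpi)
      + (projMat Φ d).mulVec (Vpi - approxOp r P α lam Uh W) := by
    conv_lhs => rw [hwpi]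
    rw [Matrix.mulVec_sub]; abel
  set c := (β * (2 - lam) + ρ * α) / (1 - β * lam) with hcdef
  have hmain : E ≤ dnorm d (Vpi - (projMat Φ d).mulVec Vpi) + c * E
      + β * ρ * dnorm d Vpi / (1 - β * lam) := by
    have h1 := dnorm_add_le hd (Vpi - (projMat Φ d).mulVec Vpi)
      ((projMat Φ d).mulVec (Vpi - approxOp r P α lam Uh W))
    rw [← hdecomp, hEsymm] at h1
    have h2 := dnorm_projMat_le hd hunit (Vpi - approxOp r P α lam Uh W)
    rw [dnorm_sub_comm hd Vpi] at h2
    have h3 : (dnorm d x + (1 - lam) * β * E) / (1 - β * lam) ≤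
        c * E + β * ρ * dnorm d Vpi / (1 - β * lam) := by
      rw [hcdef, div_mul_eq_mul_div, ← add_div]
      refine div_le_div_of_nonneg_right ?_ hlb.le
      have h4 := mul_le_mul_of_nonneg_right hαβ (mul_nonneg hρ0 (dnorm_nonneg (d := d) Vpi))
      linarith
    linarith
  rw [hEsymm, one_div_mul_eq_div, le_div_iff₀ (by linarith)]
  linarith
end

section
/- Under the exploration assumption and the ρ-approximation bound, for all V1, V2 ∈ ℝ^S: ‖σ_Û(V1) − σ_Û(V2)‖_d ≤ (β/α + ρ)·‖V1 − V2‖_d. -/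
/-!
Each coordinate of `sigmaSet Uh` is an infimum of linear functionals over a compact set, hence
superadditive (`sigmaSet_superadd`). So with `W = V1 - V2` the difference of the two values at a
state `s`, taken in either order, is at most `-sigmaSet Uh (±W) s`, and therefore, by the
approximation bound, at most `-sigmaSet U (±W) s + ρ ‖W‖_d`. The exploration assumption gives
`|u s'| ≤ (β / α) Pe s s'` for `u ∈ U s`, hence
`|sigmaSet Uh V1 s - sigmaSet Uh V2 s| ≤ (β / α) (Pe |W|) s + ρ ‖W‖_d`.
Since `d` is stationary for `Pe`, Jensen's inequality makes `Pe` nonexpansive for `‖·‖_d`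
(`sum_sq_stochastic_le`), and the constant function `ρ ‖W‖_d` has norm `ρ ‖W‖_d` because `d` has
total mass `1`; the triangle inequality for `‖·‖_d` (`sum_sq_affine_le`) concludes.
-/

open Matrix Finset

theorem sigmaSet_superadd {S : Type*} [Fintype S] (U : S → Set (S → ℝ))
    (hU : ∀ s, (U s).Nonempty) (hUc : ∀ s, IsCompact (U s)) (V W : S → ℝ) (s : S) :
    sigmaSet U V s + sigmaSet U W s ≤ sigmaSet U (V + W) s := by
  have hb : ∀ V : S → ℝ, BddBelow ((fun u => ∑ s', u s' * V s') '' U s) := fun V =>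
    ((hUc s).image (by fun_prop)).bddBelow
  refine le_csInf ((hU s).image _) ?_
  rintro _ ⟨u, hu, rfl⟩
  have h1 := csInf_le (hb V) ⟨u, hu, rfl⟩
  have h2 := csInf_le (hb W) ⟨u, hu, rfl⟩
  simp only [sigmaSet, Pi.add_apply, mul_add, sum_add_distrib]
  exact add_le_add h1 h2

theorem sum_mul_sq_le {S : Type*} [Fintype S] (w f : S → ℝ) (hw : ∀ s, 0 ≤ w s)
    (hw1 : ∑ s, w s = 1) : (∑ s, w s * f s) ^ 2 ≤ ∑ s, w s * f s ^ 2 :=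
  Real.pow_arith_mean_le_arith_mean_pow_of_even univ w f (fun s _ => hw s) hw1 even_two

/-- A stochastic matrix is nonexpansive in the norm weighted by a stationary distribution. -/
theorem sum_sq_stochastic_le {S : Type*} [Fintype S] (d : S → ℝ) (hd : ∀ s, 0 ≤ d s)
    (Q : Matrix S S ℝ) (hQ0 : ∀ s s', 0 ≤ Q s s') (hQ1 : ∀ s, ∑ s', Q s s' = 1)
    (hstat : ∀ s', ∑ s, d s * Q s s' = d s') (f : S → ℝ) :
    ∑ s, d s * (∑ s', Q s s' * f s') ^ 2 ≤ ∑ s, d s * f s ^ 2 :=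
  calc ∑ s, d s * (∑ s', Q s s' * f s') ^ 2
      ≤ ∑ s, d s * ∑ s', Q s s' * f s' ^ 2 := sum_le_sum fun s _ =>
        mul_le_mul_of_nonneg_left (sum_mul_sq_le _ _ (hQ0 s) (hQ1 s)) (hd s)
    _ = ∑ s', (∑ s, d s * Q s s') * f s' ^ 2 := by
        simp only [mul_sum, sum_mul, mul_assoc]
        exact sum_comm
    _ = ∑ s, d s * f s ^ 2 := by simp only [hstat]

/-- The triangle inequality in the `d`-weighted norm, squared, for the sum of `a • f` and a constant
`c`, where `d` is a probability vector and `N` bounds the norm of `f`. -/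
theorem sum_sq_affine_le {S : Type*} [Fintype S] (d f : S → ℝ) (hd : ∀ s, 0 ≤ d s)
    (hd1 : ∑ s, d s = 1) (a c N : ℝ) (ha : 0 ≤ a) (hc : 0 ≤ c) (hN : 0 ≤ N)
    (hf : ∑ s, d s * f s ^ 2 ≤ N ^ 2) :
    ∑ s, d s * (a * f s + c) ^ 2 ≤ (a * N + c) ^ 2 := by
  have h1 : ∑ s, d s * f s ≤ N :=
    (abs_le_of_sq_le_sq' ((sum_mul_sq_le d f hd hd1).trans hf) hN).2
  have h2 : ∑ s, d s * (a * f s + c) ^ 2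
      = a ^ 2 * ∑ s, d s * f s ^ 2 + 2 * a * c * ∑ s, d s * f s + c ^ 2 * ∑ s, d s := by
    simp only [mul_sum, ← sum_add_distrib]
    exact sum_congr rfl fun s _ => by ring
  rw [h2, hd1]
  have h3 := mul_le_mul_of_nonneg_left hf (sq_nonneg a)
  have h4 := mul_le_mul_of_nonneg_left h1 (by positivity : 0 ≤ 2 * a * c)
  linarith

theorem sigmaSet_lipschitz {S : Type*} [Fintype S] [Nonempty S]
    (d : S → ℝ) (hd : ∀ s, 0 < d s)
    (P : Matrix S S ℝ) (hP0 : ∀ s s', 0 ≤ P s s') (hP1 : ∀ s, ∑ s', P s s' = 1)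
    (α : ℝ) (hα : α ∈ Set.Ioo (0 : ℝ) 1)
    (U : S → Set (S → ℝ)) (hU : ∀ s, (U s).Nonempty) (hUc : ∀ s, IsCompact (U s))
    (Pe : Matrix S S ℝ) (hPe0 : ∀ s s', 0 ≤ Pe s s') (hPe1 : ∀ s, ∑ s', Pe s s' = 1)
    (β : ℝ) (hβ : β ∈ Set.Ioo (0 : ℝ) 1)
    (hexp1 : ∀ s s', ∀ u ∈ U s, 0 ≤ P s s' + u s')
    (hexp2 : ∀ s s', ∀ u ∈ U s, α * (P s s' + u s') ≤ β * Pe s s')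
    (hexp3 : ∀ s s', α * P s s' ≤ β * Pe s s')
    (hstat1 : ∑ s, d s = 1) (hstat2 : ∀ s', ∑ s, d s * Pe s s' = d s')
    (Uh : S → Set (S → ℝ)) (hUh : ∀ s, (Uh s).Nonempty) (hUhc : ∀ s, IsCompact (Uh s))
    (ρ : ℝ) (hρ0 : 0 ≤ ρ)
    (hρ : ∀ (V : S → ℝ) (s : S), |sigmaSet Uh V s - sigmaSet U V s| ≤ ρ * dnorm d V)
    (V1 V2 : S → ℝ) :
    dnorm d (sigmaSet Uh V1 - sigmaSet Uh V2) ≤ (β / α + ρ) * dnorm d (V1 - V2) := by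
  have hα0 : 0 < α := hα.1
  have ha : 0 ≤ β / α := (div_pos hβ.1 hα0).le
  -- Both signs of `u s'` are controlled by `Pe`: `u s' ≤ P s s' + u s'`
  -- and `hexp2` bound it above, `-u s' ≤ P s s'` (from `hexp1`) and `hexp3` bound it below.
  have habs : ∀ s s', ∀ u ∈ U s, |u s'| ≤ β / α * Pe s s' := by
    intro s s' u hu
    have e1 : P s s' + u s' ≤ β / α * Pe s s' := by
      rw [div_mul_eq_mul_div, le_div_iff₀' hα0]
      exact hexp2 s s' u hu
    have e2 : P s s' ≤ β / α * Pe s s' := by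
      rw [div_mul_eq_mul_div, le_div_iff₀' hα0]
      exact hexp3 s s'
    rw [abs_le]
    constructor <;> linarith [hP0 s s', hexp1 s s' u hu]
  have hlow : ∀ (W : S → ℝ) (s : S),
      -(β / α * ∑ s', Pe s s' * |W s'|) ≤ sigmaSet U W s := by
    intro W s
    refine le_csInf ((hU s).image _) ?_
    rintro _ ⟨u, hu, rfl⟩
    refine (neg_le_neg ?_).trans (neg_abs_le _)
    rw [mul_sum]
    refine (abs_sum_le_sum_abs _ _).trans (sum_le_sum fun s' _ => ?_)
    rw [abs_mul, ← mul_assoc]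
    exact mul_le_mul_of_nonneg_right (habs s s' u hu) (abs_nonneg _)
  have hone : ∀ (A B : S → ℝ) (s : S), sigmaSet Uh B s - sigmaSet Uh A s
      ≤ β / α * ∑ s', Pe s s' * |(A - B) s'| + ρ * dnorm d (A - B) := by
    intro A B s
    have h1 := sigmaSet_superadd Uh hUh hUhc B (A - B) s
    rw [add_sub_cancel] at h1
    linarith [hlow (A - B) s, (abs_le.1 (hρ (A - B) s)).1]
  have hsymm : dnorm d (V2 - V1) = dnorm d (V1 - V2) := by
    simp only [dnorm, Pi.sub_apply, sub_sq_comm (V2 _)]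
  have hN : 0 ≤ dnorm d (V1 - V2) := Real.sqrt_nonneg _
  have hpt : ∀ s, |(sigmaSet Uh V1 - sigmaSet Uh V2) s|
      ≤ β / α * (∑ s', Pe s s' * |(V1 - V2) s'|) + ρ * dnorm d (V1 - V2) := by
    intro s
    have h1 := hone V1 V2 s
    have h2 := hone V2 V1 s
    simp only [hsymm, Pi.sub_apply, abs_sub_comm (V2 _)] at h1 h2 ⊢
    rw [abs_le]
    constructor <;> linarith
  have hPe : ∑ s, d s * (∑ s', Pe s s' * |(V1 - V2) s'|) ^ 2 ≤ dnorm d (V1 - V2) ^ 2 := by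
    rw [dnorm, Real.sq_sqrt (sum_nonneg fun s _ => mul_nonneg (hd s).le (sq_nonneg _))]
    simpa only [sq_abs] using sum_sq_stochastic_le d (fun s => (hd s).le) Pe hPe0 hPe1 hstat2
      (fun s => |(V1 - V2) s|)
  refine Real.sqrt_le_iff.2 ⟨by positivity, ?_⟩
  rw [add_mul]
  refine le_trans (sum_le_sum fun s _ => ?_) (sum_sq_affine_le d _ (fun s => (hd s).le) hstat1
    (β / α) (ρ * dnorm d (V1 - V2)) _ ha (by positivity) hN hPe)
  exact mul_le_mul_of_nonneg_left (sq_le_sq' (abs_le.1 (hpt s)).1 (abs_le.1 (hpt s)).2) (hd s).le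
end
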